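/- Let I ⊆ {1,…,s} and Σ a finite set of zero-nonzero conditions on I. The adapted family Ada(Σ) is closed under taking subsets: if J ∈ Ada(Σ) and J' ⊆ J, then J' ∈ Ada(Σ). -/

import Mathlib

open Classical in
/-- Restriction (extension by zero) of a zero-nonzero condition to the index set `I`. -/
noncomputable def zres (I : Finset ℕ) (σ : ℕ → Fin 2) : ℕ → Fin 2 :=
  fun j => if j ∈ I then σ j else 0

open Classical in
/-- The adapted family `Ada(Σ)` of a finite set `Σ` of zero-nonzero conditions on `I`
(encoded as maps `ℕ → Fin 2` vanishing outside `I`), defined by recursion on `card I`: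
if `I = ∅` then `Ada(∅) = ∅` and `Ada({σ_∅}) = {∅}`; otherwise, with `i = max I`,
`I' = I \ {i}`, `Ξ` the set of restrictions of elements of `Σ` to `I'`, and `Ξ'` the set
of elements of `Ξ` having two different extensions in `Σ`,
`Ada(Σ) = Ada(Ξ) ∪ {J ∪ {i} : J ∈ Ada(Ξ')}`. -/
noncomputable def Ada (I : Finset ℕ) (S : Finset (ℕ → Fin 2)) : Finset (Finset ℕ) :=
  if hI : I.Nonempty then
    let i := I.max' hI
    let I' := I.erase i
    let Xi : Finset (ℕ → Fin 2) := S.image (zres I')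
    let Xi' : Finset (ℕ → Fin 2) :=
      Xi.filter (fun ξ => 1 < (S.filter (fun σ => zres I' σ = ξ)).card)
    Ada I' Xi ∪ (Ada I' Xi').image (insert i)
  else if S = ∅ then ∅ else {∅}
termination_by I.card
decreasing_by
  all_goals exact Finset.card_erase_lt_of_mem (I.max'_mem hI)

/-!
If `J ⊆ K ∪ {i}` with `K ∈ Ada(Ξ')`, then inductively `J \ {i} ∈ Ada(Ξ')`. This settles the case
`i ∈ J`; when `i ∉ J`, one has to move `J` from `Ada(Ξ')` to `Ada(Ξ)`, which is possible because
`Ξ' ⊆ Ξ` and `Ada` is monotone in the set of conditions.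
-/

lemma isLowerSet_union_image_insert {α : Type*} [DecidableEq α] {𝒜 ℬ : Set (Finset α)}
    (h𝒜 : IsLowerSet 𝒜) (hℬ : IsLowerSet ℬ) (hℬ𝒜 : ℬ ⊆ 𝒜) (a : α) :
    IsLowerSet (𝒜 ∪ insert a '' ℬ) := by
  rintro s t hts (hs | ⟨u, hu, rfl⟩)
  · exact .inl (h𝒜 hts hs)
  · have h_erase : t.erase a ∈ ℬ := hℬ (Finset.subset_insert_iff.mp hts) hu
    by_cases ha : a ∈ t
    · exact .inr ⟨t.erase a, h_erase, Finset.insert_erase ha⟩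
    · rw [Finset.erase_eq_of_notMem ha] at h_erase
      exact .inl (hℬ𝒜 h_erase)

open Classical in
/-- The set `Ξ'` in the recursion for `Ada(Σ)`: the restrictions to `I` of conditions in `S` that
have at least two extensions in `S`. It is written as in `Ada`, by counting fibres of `zres I`. -/
noncomputable def branchingRestrictions (I : Finset ℕ) (S : Finset (ℕ → Fin 2)) :
    Finset (ℕ → Fin 2) :=
  (S.image (zres I)).filter fun ξ => 1 < (S.filter fun σ => zres I σ = ξ).card

open Classical in
lemma branchingRestrictions_subset_image (I : Finset ℕ) (S : Finset (ℕ → Fin 2)) :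
    branchingRestrictions I S ⊆ S.image (zres I) :=
  Finset.filter_subset _ _

lemma branchingRestrictions_mono (I : Finset ℕ) : Monotone (branchingRestrictions I) := by
  classical
  intro S T hST ξ hξ
  obtain ⟨hξS, hcard⟩ := Finset.mem_filter.mp hξ
  exact Finset.mem_filter.mpr ⟨Finset.image_subset_image hST hξS,
    hcard.trans_le (Finset.card_le_card (Finset.filter_subset_filter _ hST))⟩

open Classical in
lemma Ada_empty (S : Finset (ℕ → Fin 2)) : Ada ∅ S = if S = ∅ then ∅ else {∅} := by
  rw [Ada, dif_neg Finset.not_nonempty_empty]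

open Classical in
lemma Ada_insert_of_forall_lt {I : Finset ℕ} {i : ℕ} (hi : ∀ j ∈ I, j < i)
    (S : Finset (ℕ → Fin 2)) :
    Ada (insert i I) S =
      Ada I (S.image (zres I)) ∪ (Ada I (branchingRestrictions I S)).image (insert i) := by
  have h_max : (insert i I).max' (I.insert_nonempty i) = i :=
    (Finset.max'_eq_iff _ _ _).mpr
      ⟨Finset.mem_insert_self i I,
        (Finset.forall_mem_insert _ _ _).mpr ⟨le_rfl, fun j hj => (hi j hj).le⟩⟩
  have h_erase : (insert i I).erase i = I :=
    Finset.erase_insert fun hiI => (hi i hiI).false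
  rw [Ada, dif_pos (I.insert_nonempty i)]
  simp only [h_max, h_erase, branchingRestrictions]

lemma Ada_mono (I : Finset ℕ) : Monotone (Ada I) := by
  classical
  induction I using Finset.induction_on_max with
  | empty =>
    intro S T hST
    rcases S.eq_empty_or_nonempty with rfl | hS
    · simp [Ada_empty]
    · simp [Ada_empty, hS.ne_empty, (hS.mono hST).ne_empty]
  | insert i I hi ih =>
    intro S T hST
    simp only [Ada_insert_of_forall_lt hi]
    exact Finset.union_subset_union (ih (Finset.image_subset_image hST))
      (Finset.image_subset_image (ih (branchingRestrictions_mono I hST)))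

lemma isLowerSet_Ada (I : Finset ℕ) (S : Finset (ℕ → Fin 2)) :
    IsLowerSet (Ada I S : Set (Finset ℕ)) := by
  classical
  induction I using Finset.induction_on_max generalizing S with
  | empty =>
    rw [Ada_empty]
    split_ifs
    · simpa using isLowerSet_empty
    · rw [Finset.coe_singleton, ← Finset.bot_eq_empty, ← Set.Iic_bot]
      exact isLowerSet_Iic ⊥
  | insert i I hi ih =>
    rw [Ada_insert_of_forall_lt hi, Finset.coe_union, Finset.coe_image]
    have h_subset : Ada I (branchingRestrictions I S) ⊆ Ada I (S.image (zres I)) :=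
      Ada_mono I (branchingRestrictions_subset_image I S)
    exact isLowerSet_union_image_insert (ih _) (ih _) (Finset.coe_subset.mpr h_subset) i

/-- Let `I ⊆ {1,…,s}` and `Σ` a finite set of zero-nonzero conditions
on `I`. The adapted family `Ada(Σ)` is closed under taking subsets: if `J ∈ Ada(Σ)`
and `J' ⊆ J`, then `J' ∈ Ada(Σ)`. -/
theorem Ada_downward_closed (s : ℕ) (I : Finset ℕ) (hI : I ⊆ Finset.Icc 1 s)
    (S : Finset (ℕ → Fin 2)) (hsupp : ∀ σ ∈ S, ∀ j ∉ I, σ j = 0)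
    (J J' : Finset ℕ) (hJ : J ∈ Ada I S) (hJ' : J' ⊆ J) :
    J' ∈ Ada I S :=
  isLowerSet_Ada I S hJ' hJ
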